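/- There exists an F-algebra homomorphism □_q → ⊠_q that sends x_i ↦ x_{i−1,i} for each i ∈ ℤ/4ℤ, and this homomorphism is injective. -/

import Mathlib

/-!
The homomorphism exists because the relations of `□_q` are among those of `⊠_q`. Injectivity
comes from a representation of `⊠_q` in which `□_q` acts faithfully.

Besides the `x_{i-1,i}`, the algebra `⊠_q` is generated by the two units `K = x_{20}` and
`T = x_{31}` and their inverses. No relation links `K` to `T`, and every remaining relation is a
`q`-Weyl relation, which says how to move some `x_{i-1,i}` past `K` or `T`, for instance
`x_{12} K = q⁻² K x_{12} + (1 - q⁻²)` and `x_{23} K = q⁻² K x_{23} + (1 - q⁻²) K²`. This suggests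
that `⊠_q` is `F[G] ⊗ □_q` as a vector space, where `G` is the free group on `K` and `T`. On
`F[G] ⊗ □_q` let `G` act by left translation and let `x_{i-1,i}` act by
`u ⊗ b ↦ σ_i(u) ⊗ x_i b + δ_i(u) ⊗ b`, where `σ_i` rescales `K` and `T` and `δ_i` is the
`σ_i`-derivation of `F[G]` dictated by the reordering rules. It exists since `G` is free
(`exists_skew_extension`).

The `q`-Weyl and `q`-Serre relations between the operators `x_{i-1,i}` have to be verified. The
difference `R` of the two sides of such a relation commutes with `K` and `T` up to nonzero scalars
(`skewComm_weyl_same`, `skewComm_weyl_opp`, `skewComm_serre_left`, `skewComm_serre_right`), and `R`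
vanishes on `1 ⊗ □_q` since the relation holds in `□_q`. As `G` translates `1 ⊗ □_q` onto a
spanning set, `R = 0` (`eq_zero_of_skewComm`). Finally the image of `b ∈ □_q` sends `1 ⊗ 1` to
`1 ⊗ b`, so it is nonzero unless `b` is.

The representation is constructed for an arbitrary algebra `B` with elements `b i` satisfying the
relations of `□_q`, and `B = □_q` is taken only at the end.
-/

noncomputable section

/-- The `q`-Serre expression `u³v − [3]_q u²vu + [3]_q uvu² − vu³`,
where `[3]_q = (q³ − q⁻³)/(q − q⁻¹)`. -/
def qSerre {F : Type*} [Field F] (q : F) {A : Type*} [Ring A] [Algebra F A] (u v : A) : A :=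
  u ^ 3 * v - ((q ^ 3 - q⁻¹ ^ 3) / (q - q⁻¹)) • (u ^ 2 * v * u)
    + ((q ^ 3 - q⁻¹ ^ 3) / (q - q⁻¹)) • (u * v * u ^ 2) - v * u ^ 3
/-- The defining relations of the algebra `□_q`. -/
inductive BoxRel (F : Type*) [Field F] (q : F) :
    FreeAlgebra F (ZMod 4) → FreeAlgebra F (ZMod 4) → Prop
  | weyl (i : ZMod 4) : BoxRel F q
      ((q - q⁻¹)⁻¹ • (q • (FreeAlgebra.ι F i * FreeAlgebra.ι F (i + 1))
        - q⁻¹ • (FreeAlgebra.ι F (i + 1) * FreeAlgebra.ι F i))) 1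
  | serre (i : ZMod 4) : BoxRel F q (qSerre q (FreeAlgebra.ι F i) (FreeAlgebra.ι F (i + 2))) 0

/-- The algebra `□_q`. -/
abbrev Box (F : Type*) [Field F] (q : F) := RingQuot (BoxRel F q)

/-- The generators `x_i` of `□_q`. -/
def bx (F : Type*) [Field F] (q : F) (i : ZMod 4) : Box F q :=
  RingQuot.mkAlgHom F (BoxRel F q) (FreeAlgebra.ι F i)
/-- Generator indices for the `q`-tetrahedron algebra: pairs `(i,j)` of elements of `ℤ/4ℤ`
with `j − i = 1` or `j − i = 2`. -/
abbrev TetGen := {p : ZMod 4 × ZMod 4 // p.2 - p.1 = 1 ∨ p.2 - p.1 = 2}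

/-- The free generator corresponding to `x_{ij}`. -/
def tg (F : Type*) [Field F] (i j : ZMod 4) (h : j - i = 1 ∨ j - i = 2) :
    FreeAlgebra F TetGen :=
  FreeAlgebra.ι F ⟨(i, j), h⟩

/-- The defining relations of the `q`-tetrahedron algebra `⊠_q`. -/
inductive TetRel (F : Type*) [Field F] (q : F) :
    FreeAlgebra F TetGen → FreeAlgebra F TetGen → Prop
  | inv (i j : ZMod 4) (h : j - i = 2) (h' : i - j = 2) :
      TetRel F q (tg F i j (Or.inr h) * tg F j i (Or.inr h')) 1
  | weyl11 (i j k : ZMod 4) (h1 : j - i = 1) (h2 : k - j = 1) : TetRel F q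
      ((q - q⁻¹)⁻¹ • (q • (tg F i j (Or.inl h1) * tg F j k (Or.inl h2))
        - q⁻¹ • (tg F j k (Or.inl h2) * tg F i j (Or.inl h1)))) 1
  | weyl12 (i j k : ZMod 4) (h1 : j - i = 1) (h2 : k - j = 2) : TetRel F q
      ((q - q⁻¹)⁻¹ • (q • (tg F i j (Or.inl h1) * tg F j k (Or.inr h2))
        - q⁻¹ • (tg F j k (Or.inr h2) * tg F i j (Or.inl h1)))) 1
  | weyl21 (i j k : ZMod 4) (h1 : j - i = 2) (h2 : k - j = 1) : TetRel F q
      ((q - q⁻¹)⁻¹ • (q • (tg F i j (Or.inr h1) * tg F j k (Or.inl h2))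
        - q⁻¹ • (tg F j k (Or.inl h2) * tg F i j (Or.inr h1)))) 1
  | serre (i j k l : ZMod 4) (h1 : j - i = 1) (h2 : k - j = 1) (h3 : l - k = 1) :
      TetRel F q (qSerre q (tg F i j (Or.inl h1)) (tg F k l (Or.inl h3))) 0

/-- The `q`-tetrahedron algebra `⊠_q`. -/
abbrev Tet (F : Type*) [Field F] (q : F) := RingQuot (TetRel F q)

/-- The generators `x_{ij}` of `⊠_q`. -/
def xt (F : Type*) [Field F] (q : F) (i j : ZMod 4) (h : j - i = 1 ∨ j - i = 2) : Tet F q :=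
  RingQuot.mkAlgHom F (TetRel F q) (tg F i j h)

/-! ### Reordering rules for `q`-Weyl pairs -/

/-- The `q`-Weyl relation `(q a b − q⁻¹ b a)/(q − q⁻¹) = 1`, with the denominator cleared. -/
def QWeyl {F : Type*} [Field F] (q : F) {A : Type*} [Ring A] [Algebra F A] (a b : A) : Prop :=
  q • (a * b) - q⁻¹ • (b * a) = (q - q⁻¹) • (1 : A)

section Algebraic

variable {F : Type*} [Field F] {q : F} {A : Type*} [Ring A] [Algebra F A]

lemma QWeyl.rule_left (hq : q ≠ 0) {k u : A} (h : QWeyl q k u) :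
    u * k = q ^ 2 • (k * u) + (1 - q ^ 2) • (1 : A) := by
  unfold QWeyl at h
  have h2 := congrArg (fun z => q • z) h
  simp only [smul_sub, smul_smul, mul_inv_cancel₀ hq, one_smul] at h2
  rw [sub_eq_iff_eq_add] at h2
  rw [pow_two, h2]
  match_scalars <;> field_simp <;> ring

/-- A `q`-Weyl pair is a `q⁻¹`-Weyl pair in the opposite order; this symmetry halves the number of
reordering computations. -/
lemma QWeyl.inv_symm {k u : A} (h : QWeyl q u k) : QWeyl q⁻¹ k u := by
  unfold QWeyl at *
  rw [inv_inv, ← neg_sub (q • _), h]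
  module

lemma QWeyl.rule_right (hq : q ≠ 0) {k u : A} (h : QWeyl q u k) :
    u * k = q⁻¹ ^ 2 • (k * u) + (1 - q⁻¹ ^ 2) • (1 : A) :=
  h.inv_symm.rule_left (inv_ne_zero hq)

lemma QWeyl.rule_left_inv (hq : q ≠ 0) {k k' v : A} (hk : k * k' = 1) (hk' : k' * k = 1)
    (h : QWeyl q k' v) :
    v * k = q⁻¹ ^ 2 • (k * v) + (1 - q⁻¹ ^ 2) • (k * k) := by
  have h1 := congrArg (fun z => q⁻¹ ^ 2 • (k * z * k)) (h.rule_left hq)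
  have e1 : k * (v * k') * k = k * v := by rw [mul_assoc, mul_assoc, hk', mul_one]
  have e2 : k * (k' * v) * k = v * k := by rw [← mul_assoc k, hk, one_mul]
  simp only [mul_add, add_mul, mul_smul_comm, smul_mul_assoc, e1, e2, mul_one, smul_add,
    smul_smul] at h1
  rw [h1]
  match_scalars <;> field_simp <;> ring

/-- `R` commutes with `k` up to a nonzero scalar. -/
def SkewComm (F : Type*) [Field F] {A : Type*} [Ring A] [Algebra F A] (R k : A) : Prop :=
  ∃ c : F, c ≠ 0 ∧ R * k = c • (k * R)

lemma SkewComm.inv {R k k' : A} (hk : k * k' = 1) (hk' : k' * k = 1)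
    (h : SkewComm F R k) : SkewComm F R k' := by
  obtain ⟨c, hc, h⟩ := h
  refine ⟨c⁻¹, inv_ne_zero hc, ?_⟩
  have h1 := congrArg (fun z => c⁻¹ • (k' * z * k')) h
  have e1 : k' * (R * k) * k' = k' * R := by rw [mul_assoc, mul_assoc, hk, mul_one]
  have e2 : k' * (k * R) * k' = R * k' := by rw [← mul_assoc k', hk', one_mul]
  simp only [mul_smul_comm, smul_mul_assoc, e1, e2, smul_smul, inv_mul_cancel₀ hc,
    one_smul] at h1
  exact h1.symm

/-- Moving `k` to the left of the defect of the `q`-Weyl relation for `u, v`: all lower order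
terms cancel. -/
lemma skewComm_weyl_same (hq : q ≠ 0) {k u v : A} (hu : QWeyl q k u) (hv : QWeyl q v k) :
    SkewComm F (q • (u * v) - q⁻¹ • (v * u) - (q - q⁻¹) • (1 : A)) k := by
  refine ⟨1, one_ne_zero, ?_⟩
  have ru := hu.rule_left hq
  have rv := hv.rule_right hq
  have ru' : ∀ z, u * (k * z) = q ^ 2 • (k * (u * z)) + (1 - q ^ 2) • z := fun z => by
    rw [← mul_assoc, ru]; simp [add_mul, mul_assoc]
  have rv' : ∀ z, v * (k * z) = q⁻¹ ^ 2 • (k * (v * z)) + (1 - q⁻¹ ^ 2) • z := fun z => by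
    rw [← mul_assoc, rv]; simp [add_mul, mul_assoc]
  simp only [mul_assoc, sub_mul, mul_sub, mul_add, add_mul, smul_mul_assoc, mul_smul_comm,
    ru, rv, ru', rv', one_mul, mul_one]
  match_scalars <;> field_simp <;> ring

/-- Variant of `skewComm_weyl_same` in which `u` forms a `q`-Weyl pair with `k` and `v` one with
its inverse `k'`. -/
lemma skewComm_weyl_opp (hq : q ≠ 0) {k k' u v : A} (hk : k * k' = 1) (hk' : k' * k = 1)
    (hu : QWeyl q u k) (hv : QWeyl q k' v) :
    SkewComm F (q • (u * v) - q⁻¹ • (v * u) - (q - q⁻¹) • (1 : A)) k := by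
  refine ⟨q⁻¹ ^ 4, pow_ne_zero _ (inv_ne_zero hq), ?_⟩
  have ru := hu.rule_right hq
  have rv := hv.rule_left_inv hq hk hk'
  have ru' : ∀ z, u * (k * z) = q⁻¹ ^ 2 • (k * (u * z)) + (1 - q⁻¹ ^ 2) • z := fun z => by
    rw [← mul_assoc, ru]; simp [add_mul, mul_assoc]
  have rv' : ∀ z, v * (k * z) = q⁻¹ ^ 2 • (k * (v * z)) + (1 - q⁻¹ ^ 2) • (k * (k * z)) :=
    fun z => by rw [← mul_assoc, rv]; simp [add_mul, mul_assoc]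
  simp only [mul_assoc, sub_mul, mul_sub, mul_add, add_mul, smul_mul_assoc, mul_smul_comm,
    ru, rv, ru', rv', one_mul, mul_one]
  match_scalars <;> field_simp <;> ring

lemma sub_inv_ne_zero (hq : q ≠ 0) (hq2 : q ^ 2 ≠ 1) : q - q⁻¹ ≠ 0 := by
  intro h
  apply hq2
  rw [pow_two]
  nth_rewrite 2 [sub_eq_zero.1 h]
  exact mul_inv_cancel₀ hq

lemma qThree_eq (hq : q ≠ 0) (hq2 : q ^ 2 ≠ 1) :
    (q ^ 3 - q⁻¹ ^ 3) / (q - q⁻¹) = q ^ 2 + 1 + q⁻¹ ^ 2 := by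
  rw [div_eq_iff (sub_inv_ne_zero hq hq2)]
  field_simp
  ring

lemma qSerre_inv (u v : A) : qSerre q⁻¹ u v = qSerre q u v := by
  unfold qSerre
  have : (q⁻¹ ^ 3 - q⁻¹⁻¹ ^ 3) / (q⁻¹ - q⁻¹⁻¹) = (q ^ 3 - q⁻¹ ^ 3) / (q - q⁻¹) := by
    rw [inv_inv, ← neg_sub (q ^ 3), ← neg_sub q, neg_div_neg_eq]
  rw [this]

/-- The `q`-Serre expression skew commutes with `k`. Writing `u = k⁻¹ + a` and `v = k + b`, where
`a` and `b` commute with `k` up to `q ^ 2` and `q ^ (-2)`, every term of the `q`-Serre expression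
other than the one in `a` and `b` alone cancels. The proof reaches the same cancellation by
moving `k` to the left of all words. -/
lemma skewComm_serre_left (hq : q ≠ 0) (hq2 : q ^ 2 ≠ 1) {k k' u v : A} (hk : k * k' = 1)
    (hk' : k' * k = 1) (hu : QWeyl q k u) (hv : QWeyl q k' v) :
    SkewComm F (qSerre q u v) k := by
  refine ⟨q ^ 4, pow_ne_zero _ hq, ?_⟩
  have ru := hu.rule_left hq
  have rv := hv.rule_left_inv hq hk hk'
  have ru' : ∀ z, u * (k * z) = q ^ 2 • (k * (u * z)) + (1 - q ^ 2) • z := fun z => by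
    rw [← mul_assoc, ru]; simp [add_mul, mul_assoc]
  have rv' : ∀ z, v * (k * z) = q⁻¹ ^ 2 • (k * (v * z)) + (1 - q⁻¹ ^ 2) • (k * (k * z)) :=
    fun z => by rw [← mul_assoc, rv]; simp [add_mul, mul_assoc]
  unfold qSerre
  rw [qThree_eq hq hq2]
  simp only [pow_succ u, pow_zero, mul_assoc, sub_mul, mul_sub, mul_add, add_mul,
    smul_mul_assoc, mul_smul_comm, ru, rv, ru', rv', one_mul, mul_one]
  match_scalars <;> field_simp <;> ring

lemma skewComm_serre_right (hq : q ≠ 0) (hq2 : q ^ 2 ≠ 1) {k k' u v : A} (hk : k * k' = 1)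
    (hk' : k' * k = 1) (hu : QWeyl q u k) (hv : QWeyl q v k') :
    SkewComm F (qSerre q u v) k := by
  rw [← qSerre_inv]
  exact skewComm_serre_left (inv_ne_zero hq) (by simpa using hq2) hk hk'
    hu.inv_symm hv.inv_symm

end Algebraic

/-! ### Operators on `F[FreeGroup α] ⊗ M` -/

section Module

variable {F : Type*} [Field F]

/-- The representation of the free group on `α` on `F[FreeGroup α] ⊗ M`, realised as
finitely supported functions `FreeGroup α →₀ M`, by left translation. -/
def leftTrans (F : Type*) [Field F] (α : Type*) (M : Type*) [AddCommGroup M] [Module F M] :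
    FreeGroup α →* Module.End F (FreeGroup α →₀ M) where
  toFun g := Finsupp.lmapDomain M F (g * ·)
  map_one' := by
    ext a b : 2
    simp [Finsupp.lmapDomain_apply, Finsupp.mapDomain_single]
  map_mul' g h := by
    ext a b : 2
    simp [Finsupp.lmapDomain_apply, Finsupp.mapDomain_single, mul_assoc]

variable {α : Type*} {M : Type*} [AddCommGroup M] [Module F M]

lemma leftTrans_single (g h : FreeGroup α) (m : M) :
    leftTrans F α M g (Finsupp.single h m) = Finsupp.single (g * h) m := by
  simp [leftTrans, Finsupp.lmapDomain_apply, Finsupp.mapDomain_single]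

lemma leftTrans_mul_inv (g : FreeGroup α) : leftTrans F α M g * leftTrans F α M g⁻¹ = 1 := by
  rw [← map_mul, mul_inv_cancel, map_one]

lemma leftTrans_inv_mul (g : FreeGroup α) : leftTrans F α M g⁻¹ * leftTrans F α M g = 1 := by
  rw [← map_mul, inv_mul_cancel, map_one]

/-- For an invertible operator `L`, the block upper triangular operator
`(v, w) ↦ (ε L v + p w, L w)` on `V × V`. -/
def triEquiv {V : Type*} [AddCommGroup V] [Module F V] (ε : F) (hε : ε ≠ 0)
    (L L' p : Module.End F V) (h : L * L' = 1) (h' : L' * L = 1) :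
    (V × V) ≃ₗ[F] (V × V) :=
  have e (v : V) : L (L' v) = v := LinearMap.congr_fun h v
  have e' (v : V) : L' (L v) = v := LinearMap.congr_fun h' v
  LinearEquiv.ofLinearMap
    ((ε • L ∘ₗ LinearMap.fst F V V + p ∘ₗ LinearMap.snd F V V).prod
      (L ∘ₗ LinearMap.snd F V V))
    ((ε⁻¹ • L' ∘ₗ (LinearMap.fst F V V - p ∘ₗ L' ∘ₗ LinearMap.snd F V V)).prod
      (L' ∘ₗ LinearMap.snd F V V))
    (by ext v <;> simp [e, smul_smul, hε])
    (by ext v <;> simp [e', smul_smul, hε])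

lemma triEquiv_apply {V : Type*} [AddCommGroup V] [Module F V] (ε : F) (hε : ε ≠ 0)
    (L L' p : Module.End F V) (h : L * L' = 1) (h' : L' * L = 1) (v w : V) :
    triEquiv ε hε L L' p h h' (v, w) = (ε • L v + p w, L w) := by
  simp [triEquiv]

/-- Since the group is free, an operator `f` on `M` extends to an operator `X` on
`F[FreeGroup α] ⊗ M` with prescribed skew commutation rules with the free generators. A skew
derivation of the group algebra is the off-diagonal entry of a homomorphism into
triangular matrices, and such a homomorphism may be prescribed freely on the generators. -/
lemma exists_skew_extension (f : Module.End F M) (ε : α → F) (hε : ∀ a, ε a ≠ 0)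
    (p : α → Module.End F (FreeGroup α →₀ M)) :
    ∃ X : Module.End F (FreeGroup α →₀ M),
      (∀ m, X (Finsupp.single 1 m) = Finsupp.single 1 (f m)) ∧
      ∀ a, X * leftTrans F α M (FreeGroup.of a) =
        ε a • (leftTrans F α M (FreeGroup.of a) * X) + p a := by
  let V := FreeGroup α →₀ M
  let φ : FreeGroup α →* ((V × V) ≃ₗ[F] (V × V)) := FreeGroup.lift fun a =>
    triEquiv (ε a) (hε a) (leftTrans F α M (FreeGroup.of a)) (leftTrans F α M (FreeGroup.of a)⁻¹) (p a)
      (leftTrans_mul_inv _) (leftTrans_inv_mul _)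
  -- In matrix form, `φ g` is `(σ g, δ g; 0, g)` with `δ` the skew derivation sought.
  have hφ : ∀ a (x : V × V), φ (FreeGroup.of a) x =
      (ε a • leftTrans F α M (FreeGroup.of a) x.1 + p a x.2,
        leftTrans F α M (FreeGroup.of a) x.2) := by
    rintro a ⟨v, w⟩
    simp only [φ, FreeGroup.lift_apply_of]
    exact triEquiv_apply _ _ _ _ _ _ _ _ _
  have hsnd : ∀ g (x : V × V), (φ g x).2 = leftTrans F α M g x.2 := by
    intro g
    induction g using FreeGroup.induction_on with
    | C1 => intro x; simp
    | of a => intro x; rw [hφ]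
    | inv_of a ih =>
      intro x
      have h1 := ih (φ (FreeGroup.of a)⁻¹ x)
      rw [← LinearEquiv.mul_apply, ← map_mul, mul_inv_cancel, map_one] at h1
      have h2 := LinearMap.congr_fun (leftTrans_inv_mul (F := F) (M := M) (FreeGroup.of a))
        (φ (FreeGroup.of a)⁻¹ x).2
      rw [Module.End.mul_apply, ← h1] at h2
      exact h2.symm
    | mul g h ihg ihh =>
      intro x
      rw [map_mul, map_mul, LinearEquiv.mul_apply, ihg, ihh]
      rfl
  let X : Module.End F V := Finsupp.lsum F fun g : FreeGroup α =>
    LinearMap.fst F V V ∘ₗ (φ g).toLinearMap ∘ₗ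
      ((Finsupp.lsingle 1 ∘ₗ f).prod (Finsupp.lsingle 1))
  have hX : ∀ g m, X (Finsupp.single g m) =
      (φ g (Finsupp.single 1 (f m), Finsupp.single 1 m)).1 := by
    intro g m
    exact Finsupp.sum_single_index (map_zero _)
  refine ⟨X, fun m => by rw [hX, map_one]; rfl, fun a => ?_⟩
  refine Finsupp.lhom_ext fun g m => ?_
  rw [LinearMap.add_apply, LinearMap.smul_apply, Module.End.mul_apply, Module.End.mul_apply,
    leftTrans_single, hX, hX, map_mul, LinearEquiv.mul_apply, hφ, hsnd, leftTrans_single, mul_one]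

/-- An operator which skew commutes with the free generators and kills `1 ⊗ M` is zero. -/
lemma eq_zero_of_skewComm {R : Module.End F (FreeGroup α →₀ M)}
    (hR : ∀ a, SkewComm F R (leftTrans F α M (FreeGroup.of a)))
    (h1 : ∀ m, R (Finsupp.single 1 m) = 0) : R = 0 := by
  have step : ∀ k, SkewComm F R k → ∀ v, R v = 0 → R (k v) = 0 := by
    rintro k ⟨c, -, hc⟩ v hv
    have := LinearMap.congr_fun hc v
    rwa [LinearMap.smul_apply, Module.End.mul_apply, Module.End.mul_apply, hv, map_zero,
      smul_zero] at this
  have key : ∀ g v, R v = 0 → R (leftTrans F α M g v) = 0 := by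
    intro g
    induction g using FreeGroup.induction_on with
    | C1 => intro v hv; simpa using hv
    | of a => exact step _ (hR a)
    | inv_of a _ => exact step _ ((hR a).inv (leftTrans_mul_inv _) (leftTrans_inv_mul _))
    | mul g h ihg ihh =>
      intro v hv
      rw [map_mul]
      exact ihg _ (ihh _ hv)
  refine Finsupp.lhom_ext fun g m => ?_
  have := key g _ (h1 m)
  rwa [leftTrans_single, mul_one] at this

end Module

/-! ### The representation of `⊠_q` -/

section Converse

variable {F : Type*} [Field F] {q : F} {A : Type*} [Ring A] [Algebra F A]

lemma qWeyl_of_rule_left (hq : q ≠ 0) {k u : A}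
    (h : u * k = q ^ 2 • (k * u) + (1 - q ^ 2) • (1 : A)) : QWeyl q k u := by
  unfold QWeyl
  rw [h]
  match_scalars <;> field_simp <;> ring

lemma qWeyl_of_rule_right (hq : q ≠ 0) {k u : A}
    (h : u * k = q⁻¹ ^ 2 • (k * u) + (1 - q⁻¹ ^ 2) • (1 : A)) : QWeyl q u k := by
  unfold QWeyl
  rw [h]
  match_scalars <;> field_simp <;> ring

lemma qWeyl_of_rule_inv_left (hq : q ≠ 0) {k k' u : A} (hk : k * k' = 1) (hk' : k' * k = 1)
    (h : u * k = q⁻¹ ^ 2 • (k * u) + (1 - q⁻¹ ^ 2) • (k * k)) : QWeyl q k' u := by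
  have h1 := congrArg (fun z => q • (k' * z * k')) h
  have e1 : k' * (u * k) * k' = k' * u := by rw [mul_assoc, mul_assoc, hk, mul_one]
  have e2 : k' * (k * u) * k' = u * k' := by rw [← mul_assoc k', hk', one_mul]
  have e3 : k' * (k * k) * k' = 1 := by rw [← mul_assoc k', hk', one_mul, hk]
  simp only [mul_add, add_mul, mul_smul_comm, smul_mul_assoc, e1, e2, e3] at h1
  unfold QWeyl
  rw [h1]
  match_scalars <;> field_simp <;> ring

lemma qWeyl_of_rule_inv_right (hq : q ≠ 0) {k k' u : A} (hk : k * k' = 1) (hk' : k' * k = 1)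
    (h : u * k = q ^ 2 • (k * u) + (1 - q ^ 2) • (k * k)) : QWeyl q u k' := by
  have := qWeyl_of_rule_inv_left (q := q⁻¹) (inv_ne_zero hq) hk hk' (by simpa using h)
  simpa using this.inv_symm

end Converse

section Model

variable {F : Type*} [Field F] {q : F} {B : Type*} [Ring B] [Algebra F B] {b : ZMod 4 → B}

lemma zmod_four_cases {P : ZMod 4 → Prop} (h0 : P 0) (h1 : P 1) (h2 : P 2) (h3 : P 3)
    (i : ZMod 4) : P i := by
  fin_cases i <;> assumption

/-- For an algebra `B`, the space `F[FreeGroup (Fin 2)] ⊗ B`. When `B` satisfies the relations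
of `□_q`, this space carries a representation of `⊠_q`. -/
abbrev Model (B : Type*) [Ring B] := FreeGroup (Fin 2) →₀ B

/-- The operators on the model: `D i` represents `x_{i,i+2}` and `X i` represents
`x_{i-1,i}`. The free generators act as `D 2` and `D 3`. -/
lemma exists_operators (hq : q ≠ 0) (b : ZMod 4 → B) :
    ∃ X D : ZMod 4 → Module.End F (Model B),
      (∀ i m, X i (Finsupp.single 1 m) = Finsupp.single 1 (b i * m)) ∧
      (∀ i, D i * D (i + 2) = 1) ∧
      (∀ i, QWeyl q (X i) (D i)) ∧
      (∀ i, QWeyl q (D i) (X (i - 1))) ∧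
      (∀ a, ∃ i, leftTrans F (Fin 2) B (FreeGroup.of a) = D i) := by
  -- `K, T, K', T'` represent `x_{20}, x_{31}, x_{02}, x_{13}`. The scalars and correction terms
  -- below are the `q`-Weyl relations of `⊠_q` solved for `x_{i-1,i} K` and `x_{i-1,i} T`.
  set K := leftTrans F (Fin 2) B (FreeGroup.of 0) with hK
  set K' := leftTrans F (Fin 2) B (FreeGroup.of 0)⁻¹
  set T := leftTrans F (Fin 2) B (FreeGroup.of 1) with hT
  set T' := leftTrans F (Fin 2) B (FreeGroup.of 1)⁻¹
  have hKK : K * K' = 1 := leftTrans_mul_inv _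
  have hKK' : K' * K = 1 := leftTrans_inv_mul _
  have hTT : T * T' = 1 := leftTrans_mul_inv _
  have hTT' : T' * T = 1 := leftTrans_inv_mul _
  have n1 : q ^ 2 ≠ 0 := pow_ne_zero _ hq
  have n2 : q⁻¹ ^ 2 ≠ 0 := pow_ne_zero _ (inv_ne_zero hq)
  obtain ⟨X0, h0, g0⟩ := exists_skew_extension (LinearMap.mulLeft F (b 0))
    ![q ^ 2, q⁻¹ ^ 2] (by simp [Fin.forall_fin_two, hq])
    ![(1 - q ^ 2) • (K * K), (1 - q⁻¹ ^ 2) • (T * T)]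
  obtain ⟨X1, h1, g1⟩ := exists_skew_extension (LinearMap.mulLeft F (b 1))
    ![q ^ 2, q ^ 2] (by simp [Fin.forall_fin_two, hq])
    ![(1 - q ^ 2) • 1, (1 - q ^ 2) • (T * T)]
  obtain ⟨X2, h2, g2⟩ := exists_skew_extension (LinearMap.mulLeft F (b 2))
    ![q⁻¹ ^ 2, q ^ 2] (by simp [Fin.forall_fin_two, hq])
    ![(1 - q⁻¹ ^ 2) • 1, (1 - q ^ 2) • 1]
  obtain ⟨X3, h3, g3⟩ := exists_skew_extension (LinearMap.mulLeft F (b 3))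
    ![q⁻¹ ^ 2, q⁻¹ ^ 2] (by simp [Fin.forall_fin_two, hq])
    ![(1 - q⁻¹ ^ 2) • (K * K), (1 - q⁻¹ ^ 2) • 1]
  refine ⟨(![X0, X1, X2, X3] : Fin 4 → _), (![K', T', K, T] : Fin 4 → _),
    zmod_four_cases h0 h1 h2 h3, zmod_four_cases hKK' hTT' hKK hTT,
    zmod_four_cases (qWeyl_of_rule_inv_right hq hKK hKK' (g0 0))
      (qWeyl_of_rule_inv_right hq hTT hTT' (g1 1))
      (qWeyl_of_rule_right hq (g2 0)) (qWeyl_of_rule_right hq (g3 1)),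
    zmod_four_cases (qWeyl_of_rule_inv_left hq hKK hKK' (g3 0))
      (qWeyl_of_rule_inv_left hq hTT hTT' (g0 1))
      (qWeyl_of_rule_left hq (g1 0)) (qWeyl_of_rule_left hq (g2 1)), ?_⟩
  rw [Fin.forall_fin_two]
  exact ⟨⟨2, rfl⟩, ⟨3, rfl⟩⟩

variable {X D : ZMod 4 → Module.End F (Model B)}

/-- On `1 ⊗ B`, polynomials in the `X i` act by left multiplication. -/
lemma lift_apply_single
    (hX : ∀ i m, X i (Finsupp.single 1 m) = Finsupp.single 1 (b i * m))
    (p : FreeAlgebra F (ZMod 4)) (m : B) :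
    FreeAlgebra.lift F X p (Finsupp.single 1 m) =
      Finsupp.single 1 (FreeAlgebra.lift F b p * m) := by
  induction p using FreeAlgebra.induction generalizing m with
  | grade0 r => simp [Algebra.algebraMap_eq_smul_one]
  | grade1 i => rw [FreeAlgebra.lift_ι_apply, FreeAlgebra.lift_ι_apply]; exact hX i m
  | mul a b ha hb => rw [map_mul, map_mul, Module.End.mul_apply, hb, ha, mul_assoc]
  | add a b ha hb => rw [map_add, map_add, LinearMap.add_apply, ha, hb, add_mul,
      Finsupp.single_add]

/-- A relation between the `b i` passes to the operators `X i` as soon as its defect skew commutes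
with the operators `D i`, because it holds on `1 ⊗ B`. -/
lemma lift_eq_zero
    (hX : ∀ i m, X i (Finsupp.single 1 m) = Finsupp.single 1 (b i * m))
    (hD : ∀ a, ∃ i, leftTrans F (Fin 2) B (FreeGroup.of a) = D i)
    {p r : FreeAlgebra F (ZMod 4)} (hp : FreeAlgebra.lift F b p = FreeAlgebra.lift F b r)
    (hR : ∀ i, SkewComm F (FreeAlgebra.lift F X (p - r)) (D i)) :
    FreeAlgebra.lift F X p = FreeAlgebra.lift F X r := by
  refine sub_eq_zero.1 ((map_sub (FreeAlgebra.lift F X) p r).symm.trans ?_)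
  refine eq_zero_of_skewComm (fun a => ?_) fun m => ?_
  · obtain ⟨i, hi⟩ := hD a
    rw [hi]
    exact hR i
  · rw [lift_apply_single hX, map_sub, hp, sub_self, zero_mul,
      Finsupp.single_zero]

lemma D_mul_D' (hDD : ∀ i, D i * D (i + 2) = 1) (i : ZMod 4) : D (i + 2) * D i = 1 := by
  have := hDD (i + 2)
  rwa [add_assoc, show (2 : ZMod 4) + 2 = 0 from rfl, add_zero] at this

/-- By invertibility, skew commutation needs to be checked on two consecutive `D i` only. -/
lemma skewComm_all (hDD : ∀ i, D i * D (i + 2) = 1) {R : Module.End F (Model B)}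
    (i : ZMod 4) (h0 : SkewComm F R (D i)) (h1 : SkewComm F R (D (i + 1))) (j : ZMod 4) :
    SkewComm F R (D j) := by
  have h2 := h0.inv (hDD i) (D_mul_D' hDD i)
  have h3 := h1.inv (hDD (i + 1)) (D_mul_D' hDD (i + 1))
  rw [add_assoc, show (1 : ZMod 4) + 2 = 3 from rfl] at h3
  have key : ∀ d : ZMod 4, SkewComm F R (D (i + d)) :=
    zmod_four_cases (by rwa [add_zero]) h1 h2 h3
  simpa using key (j - i)

lemma qWeyl_iff (hq : q ≠ 0) (hq2 : q ^ 2 ≠ 1) {A : Type*} [Ring A] [Algebra F A] (a b : A) :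
    QWeyl q a b ↔ (q - q⁻¹)⁻¹ • (q • (a * b) - q⁻¹ • (b * a)) = 1 := by
  rw [inv_smul_eq_iff₀ (sub_inv_ne_zero hq hq2)]
  rfl

lemma map_qSerre {A B : Type*} [Ring A] [Ring B] [Algebra F A] [Algebra F B] (f : A →ₐ[F] B)
    (u v : A) : f (qSerre q u v) = qSerre q (f u) (f v) := by
  simp [qSerre]

lemma lift_qSerre {σ E : Type*} [Ring E] [Algebra F E] (Y : σ → E) (i j : σ) :
    FreeAlgebra.lift F Y (qSerre q (FreeAlgebra.ι F i) (FreeAlgebra.ι F j)) =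
      qSerre q (Y i) (Y j) := by
  rw [map_qSerre, FreeAlgebra.lift_ι_apply, FreeAlgebra.lift_ι_apply]

lemma X_weyl (hq : q ≠ 0) (hq2 : q ^ 2 ≠ 1)
    (hb : ∀ x y, BoxRel F q x y → FreeAlgebra.lift F b x = FreeAlgebra.lift F b y)
    (hX : ∀ i m, X i (Finsupp.single 1 m) = Finsupp.single 1 (b i * m))
    (hD : ∀ a, ∃ i, leftTrans F (Fin 2) B (FreeGroup.of a) = D i)
    (hDD : ∀ i, D i * D (i + 2) = 1) (hXD : ∀ i, QWeyl q (X i) (D i))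
    (hDX : ∀ i, QWeyl q (D i) (X (i - 1))) (i : ZMod 4) : QWeyl q (X i) (X (i + 1)) := by
  have hDX' : ∀ i, QWeyl q (D (i + 1)) (X i) := fun i => by simpa using hDX (i + 1)
  have e : (i + 2 : ZMod 4) = i + 1 + 1 := by ring
  have hR : ∀ j, SkewComm F
      (q • (X i * X (i + 1)) - q⁻¹ • (X (i + 1) * X i) - (q - q⁻¹) • 1) (D j) :=
    skewComm_all hDD i
      (skewComm_weyl_opp hq (hDD i) (D_mul_D' hDD i) (hXD i) (by rw [e]; exact hDX' (i + 1)))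
      (skewComm_weyl_same hq (hDX' i) (hXD (i + 1)))
  have := lift_eq_zero hX hD (hb _ _ (BoxRel.weyl i)) fun j => ?_
  · rw [qWeyl_iff hq hq2]
    simpa using this
  · obtain ⟨c, hc, h⟩ := hR j
    refine ⟨c, hc, ?_⟩
    have e2 : FreeAlgebra.lift F X ((q - q⁻¹)⁻¹ •
          (q • (FreeAlgebra.ι F i * FreeAlgebra.ι F (i + 1)) -
            q⁻¹ • (FreeAlgebra.ι F (i + 1) * FreeAlgebra.ι F i)) - 1) =
        (q - q⁻¹)⁻¹ •
          (q • (X i * X (i + 1)) - q⁻¹ • (X (i + 1) * X i) - (q - q⁻¹) • 1) := by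
      have e3 : (q - q⁻¹)⁻¹ • (q - q⁻¹) • (1 : Module.End F (Model B)) = 1 :=
        inv_smul_smul₀ (sub_inv_ne_zero hq hq2) _
      have e4 := smul_sub (q - q⁻¹)⁻¹ (q • (X i * X (i + 1)) - q⁻¹ • (X (i + 1) * X i))
        ((q - q⁻¹) • 1)
      rw [e3] at e4
      refine Eq.trans ?_ e4.symm
      simp only [map_smul, map_sub, map_mul, map_one, FreeAlgebra.lift_ι_apply]
    rw [e2, smul_mul_assoc, h, mul_smul_comm, smul_comm]

lemma X_serre (hq : q ≠ 0) (hq2 : q ^ 2 ≠ 1)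
    (hb : ∀ x y, BoxRel F q x y → FreeAlgebra.lift F b x = FreeAlgebra.lift F b y)
    (hX : ∀ i m, X i (Finsupp.single 1 m) = Finsupp.single 1 (b i * m))
    (hD : ∀ a, ∃ i, leftTrans F (Fin 2) B (FreeGroup.of a) = D i)
    (hDD : ∀ i, D i * D (i + 2) = 1) (hXD : ∀ i, QWeyl q (X i) (D i))
    (hDX : ∀ i, QWeyl q (D i) (X (i - 1))) (i : ZMod 4) :
    qSerre q (X i) (X (i + 2)) = 0 := by
  have hDX' : ∀ i, QWeyl q (D (i + 1)) (X i) := fun i => by simpa using hDX (i + 1)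
  have e : (i + 1 + 2 : ZMod 4) = i + 2 + 1 := by ring
  have hR : ∀ j, SkewComm F (qSerre q (X i) (X (i + 2))) (D j) :=
    skewComm_all hDD i
      (skewComm_serre_right hq hq2 (hDD i) (D_mul_D' hDD i) (hXD i) (hXD (i + 2)))
      (skewComm_serre_left hq hq2 (hDD (i + 1)) (D_mul_D' hDD (i + 1)) (hDX' i)
        (by rw [e]; exact hDX' (i + 2)))
  have := lift_eq_zero hX hD (hb _ _ (BoxRel.serre i)) fun j => ?_
  · rw [map_zero] at this
    exact (lift_qSerre (F := F) X i (i + 2)).symm.trans this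
  · rw [sub_zero]
    exact (lift_qSerre (F := F) X i (i + 2)).symm ▸ hR j

/-- An algebra `B` with elements `b i` satisfying the relations of `□_q` gives a representation of
`⊠_q` on `Model B` in which `x_{i-1,i}` acts on `1 ⊗ B` as left multiplication by `b i`. -/
lemma exists_tet_representation (hq : q ≠ 0) (hq2 : q ^ 2 ≠ 1)
    (hb : ∀ x y, BoxRel F q x y → FreeAlgebra.lift F b x = FreeAlgebra.lift F b y) :
    ∃ ψ : Tet F q →ₐ[F] Module.End F (Model B), ∀ i m,
      ψ (xt F q (i - 1) i (Or.inl (sub_sub_cancel i 1))) (Finsupp.single 1 m) =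
        Finsupp.single 1 (b i * m) := by
  obtain ⟨X, D, hX, hDD, hXD, hDX, hD⟩ := exists_operators (F := F) hq b
  let gen : TetGen → Module.End F (Model B) := fun p =>
    if p.1.2 - p.1.1 = 1 then X p.1.2 else D p.1.1
  have gen1 : ∀ i j (h : j - i = 1), FreeAlgebra.lift F gen (tg F i j (Or.inl h)) = X j := by
    intro i j h
    simp [tg, gen, h]
  have gen2 : ∀ i j (h : j - i = 2), FreeAlgebra.lift F gen (tg F i j (Or.inr h)) = D i := by
    intro i j h
    have h21 : (2 : ZMod 4) ≠ 1 := by decide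
    simp [tg, gen, h, h21]
  have hrel : ∀ ⦃x y⦄, TetRel F q x y →
      FreeAlgebra.lift F gen x = FreeAlgebra.lift F gen y := by
    intro x y hxy
    induction hxy with
    | inv i j h h' =>
      rw [map_mul, gen2 i j h, gen2 j i h', map_one]
      obtain rfl : j = i + 2 := by rw [← h]; ring
      exact hDD i
    | weyl11 i j k h1 h2 =>
      obtain rfl : k = j + 1 := by rw [← h2]; ring
      simp only [map_smul, map_sub, map_mul, gen1 i j h1, gen1 j (j + 1) h2, map_one]
      exact (qWeyl_iff hq hq2 _ _).1 (X_weyl hq hq2 hb hX hD hDD hXD hDX j)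
    | weyl12 i j k h1 h2 =>
      simp only [map_smul, map_sub, map_mul, gen1 i j h1, gen2 j k h2, map_one]
      exact (qWeyl_iff hq hq2 _ _).1 (hXD j)
    | weyl21 i j k h1 h2 =>
      -- `k = i + 3 = i - 1` in `ℤ/4ℤ`
      obtain rfl : k = i - 1 := by
        have h3 : k = i + (j - i) + (k - j) := by ring
        rw [h3, h1, h2, add_assoc, sub_eq_add_neg]
        rfl
      simp only [map_smul, map_sub, map_mul, gen2 i j h1, gen1 j (i - 1) h2, map_one]
      exact (qWeyl_iff hq hq2 _ _).1 (hDX i)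
    | serre i j k l h1 h2 h3 =>
      obtain rfl : l = j + 2 := by
        have h4 : l = j + (k - j) + (l - k) := by ring
        rw [h4, h2, h3]
        ring
      rw [map_zero]
      refine (lift_qSerre gen _ _).trans ?_
      have e1 : gen ⟨(i, j), Or.inl h1⟩ = X j := if_pos h1
      have e2 : gen ⟨(k, j + 2), Or.inl h3⟩ = X (j + 2) := if_pos h3
      rw [e1, e2]
      exact X_serre hq hq2 hb hX hD hDD hXD hDX j
  refine ⟨RingQuot.liftAlgHom F ⟨FreeAlgebra.lift F gen, hrel⟩, fun i m => ?_⟩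
  rw [xt, RingQuot.liftAlgHom_mkAlgHom_apply, gen1 (i - 1) i (sub_sub_cancel i 1)]
  exact hX i m

/-- Any relation among the `x_{i-1,i}` in `⊠_q` also holds among elements `b i`, of an arbitrary
algebra, which satisfy the relations of `□_q`. -/
lemma lift_eq_zero_of_tet (hq : q ≠ 0) (hq2 : q ^ 2 ≠ 1)
    (hb : ∀ x y, BoxRel F q x y → FreeAlgebra.lift F b x = FreeAlgebra.lift F b y)
    (p : FreeAlgebra F (ZMod 4))
    (hp : FreeAlgebra.lift F
      (fun i : ZMod 4 => xt F q (i - 1) i (Or.inl (sub_sub_cancel i 1))) p = 0) :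
    FreeAlgebra.lift F b p = 0 := by
  set g : ZMod 4 → Tet F q := fun i => xt F q (i - 1) i (Or.inl (sub_sub_cancel i 1))
  obtain ⟨ψ, hψ⟩ := exists_tet_representation hq hq2 hb
  have h1 := lift_apply_single (X := fun i => ψ (g i)) hψ p 1
  have h2 : FreeAlgebra.lift F (fun i => ψ (g i)) = ψ.comp (FreeAlgebra.lift F g) := by
    ext j
    simp
  rw [h2, AlgHom.comp_apply, hp, map_zero, LinearMap.zero_apply, mul_one] at h1
  exact Finsupp.single_eq_zero.1 h1.symm

end Model

/-! ### The homomorphism `□_q → ⊠_q` -/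

lemma tet_weyl {F : Type*} [Field F] {q : F} (i : ZMod 4)
    (h : (i + 1) - i = 1 ∨ (i + 1) - i = 2) :
    (q - q⁻¹)⁻¹ • (q • (xt F q (i - 1) i (Or.inl (sub_sub_cancel i 1)) * xt F q i (i + 1) h)
      - q⁻¹ • (xt F q i (i + 1) h * xt F q (i - 1) i (Or.inl (sub_sub_cancel i 1)))) = 1 := by
  have := RingQuot.mkAlgHom_rel F
    (TetRel.weyl11 (F := F) (q := q) (i - 1) i (i + 1) (sub_sub_cancel i 1) (by ring))
  simp only [map_smul, map_sub, map_mul, map_one] at this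
  exact this

lemma xt_congr {F : Type*} [Field F] {q : F} {i i' j j' : ZMod 4} (hi : i = i') (hj : j = j')
    (h : j - i = 1 ∨ j - i = 2) (h' : j' - i' = 1 ∨ j' - i' = 2) :
    xt F q i j h = xt F q i' j' h' := by
  subst hi hj
  rfl

/-- Lemma 11.3 and Proposition 11.8: there is an injective algebra homomorphism
`□_q → ⊠_q` sending `x_i ↦ x_{i−1,i}`. -/
theorem stmt17 (F : Type*) [Field F] (q : F) (hq : q ≠ 0) (hq2 : q ^ 2 ≠ 1) :
    ∃ f : Box F q →ₐ[F] Tet F q,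
      (∀ i : ZMod 4, f (bx F q i) = xt F q (i - 1) i (Or.inl (sub_sub_cancel i 1))) ∧
      Function.Injective f := by
  let g : ZMod 4 → Tet F q := fun i => xt F q (i - 1) i (Or.inl (sub_sub_cancel i 1))
  have hrel : ∀ ⦃x y⦄, BoxRel F q x y → FreeAlgebra.lift F g x = FreeAlgebra.lift F g y := by
    intro x y hxy
    induction hxy with
    | weyl i =>
      simp only [map_smul, map_sub, map_mul, map_one, FreeAlgebra.lift_ι_apply]
      have e : g (i + 1) = xt F q i (i + 1) (Or.inl (add_sub_cancel_left i 1)) :=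
        xt_congr (by ring) rfl _ _
      rw [e]
      exact tet_weyl i _
    | serre i =>
      rw [map_qSerre, FreeAlgebra.lift_ι_apply, FreeAlgebra.lift_ι_apply, map_zero]
      have e : g (i + 2) = xt F q (i + 1) (i + 2) (Or.inl (by ring)) :=
        xt_congr (by ring) rfl _ _
      rw [e]
      have := RingQuot.mkAlgHom_rel F (TetRel.serre (F := F) (q := q) (i - 1) i (i + 1) (i + 2)
        (sub_sub_cancel i 1) (by ring) (by ring))
      rwa [map_qSerre, map_zero] at this
  let f : Box F q →ₐ[F] Tet F q := RingQuot.liftAlgHom F ⟨FreeAlgebra.lift F g, hrel⟩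
  have hf : ∀ p, f (RingQuot.mkAlgHom F (BoxRel F q) p) = FreeAlgebra.lift F g p := fun p =>
    RingQuot.liftAlgHom_mkAlgHom_apply F _ _ p
  refine ⟨f, fun i => by rw [bx, hf, FreeAlgebra.lift_ι_apply], ?_⟩
  have hbx : FreeAlgebra.lift F (bx F q) = RingQuot.mkAlgHom F (BoxRel F q) := by
    ext j
    simp [bx]
  rw [injective_iff_map_eq_zero]
  intro b hb
  obtain ⟨p, rfl⟩ := RingQuot.mkAlgHom_surjective F (BoxRel F q) b
  rw [hf] at hb
  rw [← hbx]
  refine lift_eq_zero_of_tet hq hq2 (fun x y hxy => ?_) p hb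
  rw [hbx]
  exact RingQuot.mkAlgHom_rel F hxy
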